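/- Minimum tree for a boundary symmetric tetrahedron: for all points P and Q in ℝ³, dist(A₁,P₀) + dist(A₂,P₀) + dist(A₃,Q₀) + dist(A₄,Q₀) + w·dist(P₀,Q₀) ≤ dist(A₁,P) + dist(A₂,P) + dist(A₃,Q) + dist(A₄,Q) + w·dist(P,Q), and the minimum value equals 2·(a12 + a34)·cos(θ/2); that is, the two nodes of the minimum tree lie on the common perpendicular of the edges A₁A₂ and A₄A₃ and the tree has the same length as the minimum construction tree of the associated isosceles trapezium. -/

import Mathlib

open Real EuclideanGeometry

noncomputable def pt3 (x y z : ℝ) : EuclideanSpace ℝ (Fin 3) :=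
  (WithLp.equiv 2 (Fin 3 → ℝ)).symm ![x, y, z]

/-!
Cut the tree at its inner edge. For a chord `AB` perpendicular to the unit vector `e`, reflecting
`B -ᵥ X` in the line of `e` bounds `dist A X + dist B X` below by the hypotenuse of the right
triangle with legs `dist A B` and `2⟪e, M -ᵥ X⟫`, where `M` is the midpoint of `AB`; hence by
`cos φ * dist A B + 2 * sin φ * ⟪e, M -ᵥ X⟫` for every angle `φ`. An inner edge of weight
`2 * sin φ` contributes at least `2 * sin φ * ⟪e, P -ᵥ Q⟫`, so the sum of the three bounds, with
`-φ` for the lower chord, telescopes to a constant. Each bound is attained at the proposed nodes.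
-/

open scoped RealInnerProductSpace

/-- The length of the tree joining `A₁, A₂` to the node `P` and `A₃, A₄` to the node `Q`, where the
edge `PQ` counts with weight `w`. -/
noncomputable def treeLength {X : Type*} [Dist X] (w : ℝ) (A₁ A₂ A₃ A₄ P Q : X) : ℝ :=
  dist A₁ P + dist A₂ P + dist A₃ Q + dist A₄ Q + w * dist P Q

lemma cos_mul_add_sin_mul_le_sqrt (φ a b : ℝ) : cos φ * a + sin φ * b ≤ √(a ^ 2 + b ^ 2) := by
  apply le_sqrt_of_sq_le
  calc (cos φ * a + sin φ * b) ^ 2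
      ≤ (cos φ * a + sin φ * b) ^ 2 + (cos φ * b - sin φ * a) ^ 2 :=
        le_add_of_nonneg_right (sq_nonneg _)
    _ = a ^ 2 + b ^ 2 := by linear_combination (a ^ 2 + b ^ 2) * sin_sq_add_cos_sq φ

lemma mul_sin_arctan_div {d : ℝ} (hd : d ≠ 0) (k : ℝ) :
    d * sin (arctan (k / d)) = k * cos (arctan (k / d)) := by
  rw [← tan_mul_cos (cos_arctan_pos _).ne', tan_arctan, ← mul_assoc, mul_div_cancel₀ _ hd]

lemma arctan_div_mem_Ico {k d : ℝ} (hk : 0 ≤ k) (hd : 0 ≤ d) :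
    arctan (k / d) ∈ Set.Ico 0 (π / 2) :=
  ⟨arctan_nonneg.2 (div_nonneg hk hd), arctan_lt_pi_div_two _⟩

lemma mul_tan_arctan_div_le {k d : ℝ} (hk : 0 ≤ k) (hkd : k ≤ d) :
    k * tan (arctan (k / d)) ≤ d := by
  rw [tan_arctan]
  exact (mul_le_of_le_one_right hk (div_le_one_of_le₀ hkd (hk.trans hkd))).trans hkd

section Chord

variable {V : Type*} [NormedAddCommGroup V] [InnerProductSpace ℝ V]

lemma norm_sub_sq_add_inner_add_sq_le {e s t : V} (he : ‖e‖ = 1) (hst : ⟪e, s - t⟫ = 0) :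
    ‖s - t‖ ^ 2 + ⟪e, s + t⟫ ^ 2 ≤ (‖s‖ + ‖t‖) ^ 2 := by
  have reflect_add : s + (ℝ ∙ e).reflection t = (s - t) + ⟪e, s + t⟫ • e := by
    have inner_eq : ⟪e, s⟫ = ⟪e, t⟫ := by rwa [inner_sub_right, sub_eq_zero] at hst
    rw [Submodule.reflection_singleton_apply, inner_add_right, inner_eq, he]
    module
  have orthogonal : ⟪s - t, ⟪e, s + t⟫ • e⟫ = 0 := by
    rw [real_inner_smul_right, real_inner_comm e, hst, mul_zero]
  calc ‖s - t‖ ^ 2 + ⟪e, s + t⟫ ^ 2 = ‖s + (ℝ ∙ e).reflection t‖ ^ 2 := by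
        rw [reflect_add, norm_add_sq_real, orthogonal, norm_smul, he, mul_one, norm_eq_abs, sq_abs]
        ring
    _ ≤ (‖s‖ + ‖(ℝ ∙ e).reflection t‖) ^ 2 := by gcongr; exact norm_add_le _ _
    _ = (‖s‖ + ‖t‖) ^ 2 := by rw [LinearIsometryEquiv.norm_map]

variable {E : Type*} [MetricSpace E] [NormedAddTorsor V E] {e : V} {A B : E}

lemma cos_mul_dist_add_sin_mul_inner_le_dist_add_dist (he : ‖e‖ = 1) (hAB : ⟪e, A -ᵥ B⟫ = 0)
    (φ : ℝ) (X : E) :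
    cos φ * dist A B + sin φ * (2 * ⟪e, midpoint ℝ A B -ᵥ X⟫) ≤ dist A X + dist B X := by
  have sub_eq : (A -ᵥ X) - (B -ᵥ X) = A -ᵥ B := vsub_sub_vsub_cancel_right A B X
  have inner_add : ⟪e, (A -ᵥ X) + (B -ᵥ X)⟫ = 2 * ⟪e, midpoint ℝ A B -ᵥ X⟫ := by
    rw [midpoint_vsub, ← smul_add, invOf_eq_inv, real_inner_smul_right,
      mul_inv_cancel_left₀ two_ne_zero]
  have hypotenuse_sq := norm_sub_sq_add_inner_add_sq_le he (sub_eq ▸ hAB)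
  rw [sub_eq, inner_add] at hypotenuse_sq
  simp only [← dist_eq_norm_vsub V] at hypotenuse_sq
  exact (cos_mul_add_sin_mul_le_sqrt φ _ _).trans ((sqrt_le_left (by positivity)).2 hypotenuse_sq)

lemma dist_smul_vadd_midpoint (he : ‖e‖ = 1) (hAB : ⟪e, A -ᵥ B⟫ = 0) (t : ℝ) :
    dist A (t • e +ᵥ midpoint ℝ A B) = √((dist A B / 2) ^ 2 + t ^ 2) := by
  have orthogonal : ⟪(⅟2 : ℝ) • (A -ᵥ B), t • e⟫ = 0 := by
    rw [real_inner_smul_left, real_inner_smul_right, real_inner_comm e, hAB, mul_zero, mul_zero]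
  rw [eq_comm, sqrt_eq_iff_eq_sq (by positivity) dist_nonneg, dist_eq_norm_vsub V A (_ +ᵥ _),
    vsub_vadd_eq_vsub_sub, left_vsub_midpoint, norm_sub_sq_real, orthogonal, norm_smul, norm_smul,
    he, ← dist_eq_norm_vsub V, invOf_eq_inv, norm_inv, norm_two, mul_one, norm_eq_abs, sq_abs]
  ring

lemma dist_add_dist_smul_vadd_midpoint (he : ‖e‖ = 1) (hAB : ⟪e, A -ᵥ B⟫ = 0) {φ : ℝ}
    (hφ : 0 < cos φ) :
    dist A ((dist A B / 2 * tan φ) • e +ᵥ midpoint ℝ A B) +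
      dist B ((dist A B / 2 * tan φ) • e +ᵥ midpoint ℝ A B) = dist A B / cos φ := by
  have hypotenuse : √((dist A B / 2) ^ 2 + (dist A B / 2 * tan φ) ^ 2) = dist A B / 2 / cos φ := by
    rw [← inv_sqrt_one_add_tan_sq hφ, div_inv_eq_mul, ← sqrt_sq (by positivity : 0 ≤ dist A B / 2),
      ← sqrt_mul (by positivity), sqrt_sq (by positivity)]
    ring_nf
  have hBA : ⟪e, B -ᵥ A⟫ = 0 := by rw [← neg_vsub_eq_vsub_rev, inner_neg_right, hAB, neg_zero]
  have dist_right := dist_smul_vadd_midpoint he hBA (dist A B / 2 * tan φ)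
  rw [midpoint_comm, dist_comm B A] at dist_right
  rw [dist_smul_vadd_midpoint he hAB, dist_right, hypotenuse]
  ring

end Chord

section Tree

variable {V E : Type*} [NormedAddCommGroup V] [InnerProductSpace ℝ V] [MetricSpace E]
  [NormedAddTorsor V E] {e : V} {A₁ A₂ A₃ A₄ : E} {d φ : ℝ}

lemma cos_mul_add_sin_mul_le_treeLength (he : ‖e‖ = 1) (h₁₂ : ⟪e, A₁ -ᵥ A₂⟫ = 0)
    (h₃₄ : ⟪e, A₃ -ᵥ A₄⟫ = 0) (hd : midpoint ℝ A₁ A₂ -ᵥ midpoint ℝ A₃ A₄ = d • e)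
    (hφ : 0 ≤ sin φ) (P Q : E) :
    (dist A₁ A₂ + dist A₃ A₄) * cos φ + 2 * d * sin φ ≤
      treeLength (2 * sin φ) A₁ A₂ A₃ A₄ P Q := by
  have upper := cos_mul_dist_add_sin_mul_inner_le_dist_add_dist he h₁₂ φ P
  have lower := cos_mul_dist_add_sin_mul_inner_le_dist_add_dist he h₃₄ (-φ) Q
  rw [cos_neg, sin_neg] at lower
  have inner_edge : 2 * sin φ * ⟪e, P -ᵥ Q⟫ ≤ 2 * sin φ * dist P Q := by
    gcongr
    simpa only [he, one_mul, dist_eq_norm_vsub V] using real_inner_le_norm e (P -ᵥ Q)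
  have telescope :
      ⟪e, midpoint ℝ A₁ A₂ -ᵥ P⟫ + ⟪e, P -ᵥ Q⟫ - ⟪e, midpoint ℝ A₃ A₄ -ᵥ Q⟫ = d := by
    rw [← inner_add_right, ← inner_sub_right, vsub_add_vsub_cancel, vsub_sub_vsub_cancel_right, hd,
      real_inner_smul_right, real_inner_self_eq_norm_sq, he, one_pow, mul_one]
  unfold treeLength
  linear_combination upper + lower + inner_edge - 2 * sin φ * telescope

lemma treeLength_smul_vadd_midpoint (he : ‖e‖ = 1) (h₁₂ : ⟪e, A₁ -ᵥ A₂⟫ = 0)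
    (h₃₄ : ⟪e, A₃ -ᵥ A₄⟫ = 0) (hd : midpoint ℝ A₁ A₂ -ᵥ midpoint ℝ A₃ A₄ = d • e)
    (hφ : 0 < cos φ) (hle : (dist A₁ A₂ + dist A₃ A₄) / 2 * tan φ ≤ d) :
    treeLength (2 * sin φ) A₁ A₂ A₃ A₄ (-(dist A₁ A₂ / 2 * tan φ) • e +ᵥ midpoint ℝ A₁ A₂)
      ((dist A₃ A₄ / 2 * tan φ) • e +ᵥ midpoint ℝ A₃ A₄) =
      (dist A₁ A₂ + dist A₃ A₄) * cos φ + 2 * d * sin φ := by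
  have upper := dist_add_dist_smul_vadd_midpoint he h₁₂ (φ := -φ) (by rwa [cos_neg])
  rw [cos_neg, tan_neg, mul_neg] at upper
  have lower := dist_add_dist_smul_vadd_midpoint he h₃₄ hφ
  have inner_edge : dist (-(dist A₁ A₂ / 2 * tan φ) • e +ᵥ midpoint ℝ A₁ A₂)
      ((dist A₃ A₄ / 2 * tan φ) • e +ᵥ midpoint ℝ A₃ A₄) =
        d - (dist A₁ A₂ + dist A₃ A₄) / 2 * tan φ := by
    rw [dist_eq_norm_vsub V, vadd_vsub_vadd_comm, hd, ← sub_smul, ← add_smul, norm_smul, he,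
      mul_one, norm_of_nonneg] <;> linarith
  rw [treeLength, upper, add_assoc _ (dist A₃ _), lower, inner_edge, tan_eq_sin_div_cos]
  field_simp
  linear_combination -(dist A₁ A₂ + dist A₃ A₄) * sin_sq_add_cos_sq φ

theorem stmt_19_general {P₀ Q₀ : E} (he : ‖e‖ = 1) (h₁₂ : ⟪e, A₁ -ᵥ A₂⟫ = 0)
    (h₃₄ : ⟪e, A₃ -ᵥ A₄⟫ = 0) (hd : midpoint ℝ A₁ A₂ -ᵥ midpoint ℝ A₃ A₄ = d • e)
    (hφ : φ ∈ Set.Ico 0 (π / 2)) (hle : (dist A₁ A₂ + dist A₃ A₄) / 2 * tan φ ≤ d)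
    (hP₀ : P₀ = -(dist A₁ A₂ / 2 * tan φ) • e +ᵥ midpoint ℝ A₁ A₂)
    (hQ₀ : Q₀ = (dist A₃ A₄ / 2 * tan φ) • e +ᵥ midpoint ℝ A₃ A₄) :
    (∀ P Q : E, treeLength (2 * sin φ) A₁ A₂ A₃ A₄ P₀ Q₀ ≤
      treeLength (2 * sin φ) A₁ A₂ A₃ A₄ P Q) ∧
    treeLength (2 * sin φ) A₁ A₂ A₃ A₄ P₀ Q₀ =
      (dist A₁ A₂ + dist A₃ A₄) * cos φ + 2 * d * sin φ := by
  have cos_pos : 0 < cos φ := cos_pos_of_mem_Ioo ⟨by linarith [hφ.1, pi_pos], hφ.2⟩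
  have sin_nonneg : 0 ≤ sin φ := sin_nonneg_of_mem_Icc ⟨hφ.1, by linarith [hφ.2, pi_pos]⟩
  have length_eq := treeLength_smul_vadd_midpoint he h₁₂ h₃₄ hd cos_pos hle
  rw [← hP₀, ← hQ₀] at length_eq
  exact ⟨fun P Q ↦ length_eq.trans_le
    (cos_mul_add_sin_mul_le_treeLength he h₁₂ h₃₄ hd sin_nonneg P Q), length_eq⟩

end Tree

section Coordinates

lemma norm_pt3_zero_zero_one : ‖pt3 0 0 1‖ = 1 := by
  simp [pt3, EuclideanSpace.norm_eq, Fin.sum_univ_three]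

variable (a b a' b' c c' : ℝ)

lemma inner_pt3_zero_zero_one_vsub : ⟪pt3 0 0 1, pt3 a b c -ᵥ pt3 a' b' c⟫ = 0 := by
  simp [pt3, PiLp.inner_apply, Fin.sum_univ_three]

lemma pt3_vsub_pt3 : pt3 a b c -ᵥ pt3 a b c' = (c - c') • pt3 0 0 1 := by
  ext i; fin_cases i <;> simp [pt3]

lemma smul_vadd_pt3 (t : ℝ) : t • pt3 0 0 1 +ᵥ pt3 a b c = pt3 a b (c + t) := by
  ext i; fin_cases i <;> simp [pt3, add_comm]

lemma midpoint_pt3_neg : midpoint ℝ (pt3 a b c) (pt3 (-a) (-b) c) = pt3 0 0 c := by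
  ext i; fin_cases i <;> simp [pt3, midpoint_eq_smul_add, ← two_mul]

lemma dist_pt3_neg : dist (pt3 a b c) (pt3 (-a) (-b) c) = 2 * √(a ^ 2 + b ^ 2) := by
  have sq_sum : (a - -a) ^ 2 + (b - -b) ^ 2 + (c - c) ^ 2 = 2 ^ 2 * (a ^ 2 + b ^ 2) := by ring
  have dist_eq : dist (pt3 a b c) (pt3 (-a) (-b) c) =
      √((a - -a) ^ 2 + (b - -b) ^ 2 + (c - c) ^ 2) := by
    simp [pt3, EuclideanSpace.dist_eq, Fin.sum_univ_three, Real.dist_eq]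
  rw [dist_eq, sq_sum, sqrt_mul (by positivity), sqrt_sq zero_le_two]

end Coordinates

theorem stmt_19 (x₁ y₁ x₄ z₁ a12 a34 d θ w : ℝ)
    (hx₁ : 0 < x₁) (hy₁ : 0 ≤ y₁) (hx₄ : 0 < x₄) (hz₁ : 0 < z₁)
    (ha12 : a12 = 2 * Real.sqrt (x₁ ^ 2 + y₁ ^ 2)) (ha34 : a34 = 2 * x₄)
    (hd : d = z₁) (hdmax : max a12 a34 < d)
    (hθ : θ = 2 * Real.arctan ((a12 + a34) / (2 * d)))
    (hw : w = 2 * Real.sin (θ / 2))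
    (A₁ A₂ A₃ A₄ P₀ Q₀ : EuclideanSpace ℝ (Fin 3))
    (hA₁ : A₁ = pt3 (-x₁) (-y₁) z₁) (hA₂ : A₂ = pt3 x₁ y₁ z₁)
    (hA₃ : A₃ = pt3 x₄ 0 0) (hA₄ : A₄ = pt3 (-x₄) 0 0)
    (hP₀ : P₀ = pt3 0 0 (d - a12 / 2 * Real.tan (θ / 2)))
    (hQ₀ : Q₀ = pt3 0 0 (a34 / 2 * Real.tan (θ / 2))) :
    (∀ P Q : EuclideanSpace ℝ (Fin 3),
      dist A₁ P₀ + dist A₂ P₀ + dist A₃ Q₀ + dist A₄ Q₀ + w * dist P₀ Q₀ ≤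
      dist A₁ P + dist A₂ P + dist A₃ Q + dist A₄ Q + w * dist P Q) ∧
    dist A₁ P₀ + dist A₂ P₀ + dist A₃ Q₀ + dist A₄ Q₀ + w * dist P₀ Q₀ =
      2 * (a12 + a34) * Real.cos (θ / 2) := by
  subst hd hw
  have half_angle : θ / 2 = arctan ((a12 + a34) / 2 / d) := by rw [hθ, div_div]; ring
  have dist₁₂ : dist A₁ A₂ = a12 := by rw [dist_comm, hA₁, hA₂, dist_pt3_neg, ha12]
  have dist₃₄ : dist A₃ A₄ = a34 := by
    simpa [hA₃, hA₄, ha34, sqrt_sq hx₄.le] using dist_pt3_neg x₄ 0 0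
  have midpoint₁₂ : midpoint ℝ A₁ A₂ = pt3 0 0 d := by
    rw [midpoint_comm, hA₁, hA₂, midpoint_pt3_neg]
  have midpoint₃₄ : midpoint ℝ A₃ A₄ = pt3 0 0 0 := by
    simpa [hA₃, hA₄] using midpoint_pt3_neg x₄ 0 0
  have half_nonneg : 0 ≤ (a12 + a34) / 2 := by rw [ha12, ha34]; positivity
  have half_le : (a12 + a34) / 2 ≤ d := by linarith [le_max_left a12 a34, le_max_right a12 a34]
  obtain ⟨minimal, length_eq⟩ := stmt_19_general (A₁ := A₁) (A₂ := A₂) (A₃ := A₃) (A₄ := A₄)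
    (P₀ := P₀) (Q₀ := Q₀) norm_pt3_zero_zero_one
    (by rw [hA₁, hA₂, inner_pt3_zero_zero_one_vsub])
    (by rw [hA₃, hA₄, inner_pt3_zero_zero_one_vsub])
    (by rw [midpoint₁₂, midpoint₃₄, pt3_vsub_pt3, sub_zero])
    (half_angle ▸ arctan_div_mem_Ico half_nonneg hz₁.le)
    (by rw [dist₁₂, dist₃₄, half_angle]; exact mul_tan_arctan_div_le half_nonneg half_le)
    (by rwa [dist₁₂, midpoint₁₂, smul_vadd_pt3, ← sub_eq_add_neg])
    (by rwa [dist₃₄, midpoint₃₄, smul_vadd_pt3, zero_add])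
  refine ⟨minimal, length_eq.trans ?_⟩
  rw [dist₁₂, dist₃₄, half_angle]
  linear_combination 2 * mul_sin_arctan_div hz₁.ne' ((a12 + a34) / 2)
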